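/- arXiv:1902.01241 — 2 statements merged into one kernel-verified Lean document; each statement's English description precedes it below -/
import Mathlib

section
/- For integers 2 ≤ k ≤ n and 1 ≤ i ≤ ⌊k/2⌋ - 1, the Pieri rule gives h_{n-k} · s_{(k-2i, 2^i)} = Σ_{p=max(0, n-2k+2i+2)}^{n-k} s_{(k+p-2i, n-k-p+2, 2^{i-1})} + Σ_{p=max(0, n-2k+2i+1)}^{n-k-1} s_{(k+p-2i, n-k-p+1, 2^{i-1}, 1)} + Σ_{p=max(0, n-2k+2i)}^{n-k-2} s_{(k+p-2i, n-k-p, 2^i)}. -/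
/-- The Schur function of the sequence `μ` (a partition when `μ` is weakly decreasing),
defined by the Jacobi–Trudi determinant `s_μ = det(h_{μ_i - i + j})`, where `h : ℤ → R`
is the family of complete homogeneous symmetric functions. -/
noncomputable def schurJT {R : Type*} [CommRing R] (h : ℤ → R) {r : ℕ} (μ : Fin r → ℤ) : R :=
  Matrix.det (Matrix.of fun i j : Fin r => h (μ i - (i : ℤ) + (j : ℤ)))

/-- The generating series `∑ b, h (c + b) X ^ b` of a tail of the family `h`. -/
noncomputable def tailSeries {R : Type*} [CommRing R] (h : ℤ → R) (c : ℤ) : PowerSeries R :=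
  PowerSeries.mk fun b => h (c + b)

section Determinants

variable {R : Type*} [CommRing R]

theorem det_eq_of_forall_col_eq_smul_add_succ {n : ℕ} {A B : Matrix (Fin (n + 1)) (Fin (n + 1)) R}
    (c : Fin n → R) (hlast : ∀ i, A i (Fin.last n) = B i (Fin.last n))
    (hcast : ∀ i (j : Fin n), A i j.castSucc = B i j.castSucc + c j * A i j.succ) :
    A.det = B.det := by
  rw [← Matrix.det_submatrix_equiv_self Fin.revPerm A,
    ← Matrix.det_submatrix_equiv_self Fin.revPerm B]
  refine Matrix.det_eq_of_forall_col_eq_smul_add_pred (fun j => c j.rev) ?_ ?_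
  · intro i
    simpa using hlast i.rev
  · intro i j
    simpa [Fin.rev_succ, Fin.rev_castSucc] using hcast i.rev j.rev

theorem det_of_last_row_eq_zero {n : ℕ} (A : Matrix (Fin (n + 1)) (Fin (n + 1)) R)
    (hA : ∀ j : Fin n, A (Fin.last n) j.castSucc = 0) :
    A.det = A (Fin.last n) (Fin.last n) * (A.submatrix Fin.castSucc Fin.castSucc).det := by
  rw [Matrix.det_succ_row A (Fin.last n), Fin.sum_univ_castSucc]
  have hs : ((-1 : R)) ^ (n + n) = 1 := Even.neg_one_pow ⟨n, rfl⟩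
  simp [hA, hs, Fin.succAbove_last]

theorem det_updateRow_finset_sum {m ι : Type*} [Fintype m] [DecidableEq m] (A : Matrix m m R)
    (i : m) (s : Finset ι) (x : ι → R) (v : ι → m → R) :
    (A.updateRow i fun j => ∑ q ∈ s, x q * v q j).det =
      ∑ q ∈ s, x q * (A.updateRow i (v q)).det := by
  classical
  have hv : (fun j => ∑ q ∈ s, x q * v q j) = ∑ q ∈ s, x q • v q := by
    ext j
    simp
  rw [hv]
  refine ((Matrix.detRowAlternating (R := R) (n := m)).toMultilinearMap.map_update_sum s i
    (fun q => x q • v q) A).trans (Finset.sum_congr rfl fun q _ => ?_)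
  exact Matrix.det_updateRow_smul A i (x q) (v q)

theorem coeff_det_updateRow_zero {n : ℕ} (A : Matrix (Fin (n + 1)) (Fin (n + 1)) R)
    (f : Fin (n + 1) → PowerSeries R) (d : ℕ) :
    PowerSeries.coeff d ((A.map PowerSeries.C).updateRow 0 f).det =
      (A.updateRow 0 fun j => PowerSeries.coeff d (f j)).det := by
  rw [Matrix.det_succ_row_zero, Matrix.det_succ_row_zero, map_sum]
  refine Finset.sum_congr rfl fun j _ => ?_
  have h1 : (((A.map PowerSeries.C).updateRow 0 f).submatrix Fin.succ j.succAbove).det =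
      PowerSeries.C ((A.updateRow 0 fun j => PowerSeries.coeff d (f j)).submatrix
        Fin.succ j.succAbove).det := by
    rw [RingHom.map_det]
    congr 1
  rw [h1, PowerSeries.coeff_mul_C]
  have h2 : ((-1 : PowerSeries R)) ^ (j : ℕ) = PowerSeries.C ((-1) ^ (j : ℕ)) := by simp
  rw [h2, PowerSeries.coeff_C_mul]
  simp

end Determinants

section Tails

variable {R : Type*} [CommRing R] (h : ℤ → R)

theorem tailSeries_eq_add (c : ℤ) :
    tailSeries h c = PowerSeries.C (h c) + PowerSeries.X * tailSeries h (c + 1) := by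
  ext d
  cases d with
  | zero => simp [tailSeries]
  | succ d =>
    simp only [tailSeries, map_add, PowerSeries.coeff_mk, PowerSeries.coeff_succ_X_mul,
      PowerSeries.coeff_C]
    simp [add_assoc, add_comm (1 : ℤ)]

theorem tailSeries_eq_sum_add (c : ℤ) (l : ℕ) :
    tailSeries h c = ∑ q ∈ Finset.range l, PowerSeries.X ^ q * PowerSeries.C (h (c + q)) +
      PowerSeries.X ^ l * tailSeries h (c + l) := by
  induction l with
  | zero => simp
  | succ l ih =>
    rw [ih, Finset.sum_range_succ, tailSeries_eq_add h (c + l)]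
    push_cast
    ring_nf

end Tails

theorem sum_range_ite_eq_sum_Icc {M : Type*} [AddCommMonoid M] (f : ℤ → M) (l m r : ℕ) :
    (∑ q ∈ Finset.range l, if q + r ≤ m then f ((m - (q + r) : ℕ) : ℤ) else 0) =
      ∑ p ∈ Finset.Icc (max 0 ((m : ℤ) - r - l + 1)) ((m : ℤ) - r), f p := by
  rw [← Finset.sum_filter]
  refine Finset.sum_bij' (fun q _ => ((m - (q + r) : ℕ) : ℤ)) (fun p _ => (m - r - p).toNat)
    ?_ ?_ ?_ ?_ ?_
  · intro q hq
    simp only [Finset.mem_filter, Finset.mem_range, Finset.mem_Icc] at hq ⊢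
    omega
  · intro p hp
    simp only [Finset.mem_filter, Finset.mem_range, Finset.mem_Icc] at hp ⊢
    omega
  · intro q hq
    simp only [Finset.mem_filter, Finset.mem_range] at hq
    omega
  · intro p hp
    simp only [Finset.mem_Icc] at hp
    omega
  · intro q _
    rfl

section Pieri

variable {R : Type*} [CommRing R] (h : ℤ → R)

/-- The Jacobi–Trudi determinant of `(a, 2 ^ (e + 1), 0)` with every entry replaced by the
corresponding tail series is the generating series of the products `h m * s_(a, 2 ^ (e + 1))`. -/
theorem det_tailSeries_eq (hneg : ∀ m : ℤ, m < 0 → h m = 0) (a : ℤ) (e : ℕ) :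
    (Matrix.of fun r j : Fin (e + 3) => tailSeries h ((if (r : ℕ) = 0 then a
      else if (r : ℕ) = e + 2 then 0 else 2) - (r : ℤ) + (j : ℤ))).det =
    tailSeries h 0 * PowerSeries.C
      (schurJT h fun j : Fin (e + 2) => if (j : ℕ) = 0 then a else 2) := by
  set c : Fin (e + 3) → ℤ := fun r => (if (r : ℕ) = 0 then a
      else if (r : ℕ) = e + 2 then 0 else 2) - (r : ℤ) with hc
  let B : Matrix (Fin (e + 3)) (Fin (e + 3)) (PowerSeries R) := Matrix.of fun r j =>
    if (j : ℕ) = e + 2 then tailSeries h (c r + j) else PowerSeries.C (h (c r + j))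
  have hAB : (Matrix.of fun r j : Fin (e + 3) => tailSeries h (c r + (j : ℤ))).det = B.det := by
    refine det_eq_of_forall_col_eq_smul_add_succ (fun _ => PowerSeries.X) ?_ ?_
    · intro r
      simp [B]
    · intro r j
      have hj : (j : ℕ) ≠ e + 2 := by omega
      simp only [B, Matrix.of_apply, Fin.val_castSucc, Fin.val_succ, hj, if_false]
      rw [tailSeries_eq_add]
      push_cast
      rw [add_assoc]
  have hlast : c (Fin.last (e + 2)) = -((e : ℤ) + 2) := by simp [hc]
  rw [hAB, det_of_last_row_eq_zero]
  · congr 1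
    · simp only [B, Matrix.of_apply, hlast]
      simp
    · rw [schurJT, RingHom.map_det]
      congr 1
      ext1 r j
      have hr : (r : ℕ) ≠ e + 2 := by omega
      have hj : (j : ℕ) ≠ e + 2 := by omega
      simp [B, hc, hr, hj]
  · intro j
    have hj : (j : ℕ) ≠ e + 2 := by omega
    simp only [B, Matrix.of_apply, hlast, Fin.val_castSucc, hj, if_false]
    rw [hneg _ (by omega), map_zero]

/-- Row reduction of the matrix of tail series attached to `(a, 2 ^ (e + 1), 0)`. -/
theorem det_tailSeries_eq_sum (l e : ℕ) :
    (Matrix.of fun r j : Fin (e + 3) => tailSeries h ((if (r : ℕ) = 0 then (l : ℤ) + 1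
      else if (r : ℕ) = e + 2 then 0 else 2) - (r : ℤ) + (j : ℤ))).det =
    ∑ t ∈ Finset.range 3, ∑ q ∈ Finset.range l, PowerSeries.X ^ (q + t) *
      (((Matrix.of fun r j : Fin (e + 3) => h ((if (r : ℕ) = 1 then 2 + (q : ℤ)
        else if (r : ℕ) = e + 2 then t else 2) - (r : ℤ) + (j : ℤ))).map PowerSeries.C).updateRow 0
          fun j => tailSeries h (l + 1 + (j : ℤ))).det := by
  let M : Matrix (Fin (e + 3)) (Fin (e + 3)) (PowerSeries R) := Matrix.of fun r j =>
    if (r : ℕ) = 0 then tailSeries h (l + 1 + (j : ℤ)) else PowerSeries.C (h (2 - (r : ℤ) + j))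
  let u (q : ℕ) (j : Fin (e + 3)) : PowerSeries R := PowerSeries.C (h (1 + (j : ℤ) + q))
  let w (t : ℕ) (j : Fin (e + 3)) : PowerSeries R :=
    PowerSeries.C (h (-((e : ℤ) + 2) + j + t))
  have hstep := Matrix.det_eq_of_forall_row_eq_smul_add_pred
    (A := Matrix.of fun r j : Fin (e + 3) => tailSeries h ((if (r : ℕ) = 0 then (l : ℤ) + 1
      else if (r : ℕ) = e + 2 then 0 else 2) - (r : ℤ) + (j : ℤ)))
    (B := (M.updateRow 1 fun j => ∑ q ∈ Finset.range l, PowerSeries.X ^ q * u q j).updateRow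
      (Fin.last (e + 2)) fun j => ∑ t ∈ Finset.range 3, PowerSeries.X ^ t * w t j)
    (fun r => if (r : ℕ) = 0 then PowerSeries.X ^ l
      else if (r : ℕ) = e + 1 then PowerSeries.X ^ 3 else PowerSeries.X) ?_ ?_
  · rw [hstep, det_updateRow_finset_sum]
    refine Finset.sum_congr rfl fun t _ => ?_
    rw [Matrix.updateRow_comm _ (by simp [Fin.ext_iff]), det_updateRow_finset_sum, Finset.mul_sum]
    refine Finset.sum_congr rfl fun q _ => ?_
    rw [← mul_assoc, ← pow_add, add_comm t q]
    congr 2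
    ext1 r j
    simp only [Matrix.updateRow_apply, Matrix.map_apply, Matrix.of_apply, M, u, w, Fin.ext_iff,
      Fin.val_last, Fin.val_zero, Fin.val_one]
    split_ifs <;> first | omega | rfl | (push_cast [*]; ring_nf)
  · intro j
    simp only [Matrix.updateRow_apply, Matrix.of_apply, M, Fin.ext_iff, Fin.val_last,
      Fin.val_zero, Fin.val_one]
    simp
  · intro r j
    simp only [Matrix.updateRow_apply, Matrix.of_apply, M, u, w, Fin.ext_iff,
      Fin.val_last, Fin.val_one, Fin.val_succ, Fin.val_castSucc]
    rcases eq_or_ne (r : ℕ) 0 with hr | hr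
    · simp only [hr]
      norm_num
      rw [tailSeries_eq_sum_add h _ l]
      ring_nf
    rcases eq_or_ne (r : ℕ) (e + 1) with hr' | hr'
    · simp only [hr']
      norm_num
      rw [tailSeries_eq_sum_add h _ 3]
      push_cast
      ring_nf
    · have := r.isLt
      have h1 : (r : ℕ) ≠ e + 2 := by omega
      simp only [hr, hr', h1]
      norm_num [hr, hr']
      rw [tailSeries_eq_add h]
      ring_nf

/-- The Pieri rule for a partition `(l + 1, 2 ^ (e + 1))`, with all summands written as
determinants of the same size. -/
theorem mul_schurJT_eq_sum (hneg : ∀ m : ℤ, m < 0 → h m = 0) (l e m : ℕ) :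
    h m * schurJT h (fun j : Fin (e + 2) => if (j : ℕ) = 0 then (l : ℤ) + 1 else 2) =
      ∑ t ∈ Finset.range 3,
        ∑ p ∈ Finset.Icc (max 0 ((m : ℤ) - t - l + 1)) ((m : ℤ) - t),
          schurJT h (fun j : Fin (e + 3) => if (j : ℕ) = 0 then l + 1 + p
            else if (j : ℕ) = 1 then 2 + (m - t - p)
            else if (j : ℕ) = e + 2 then t else 2) := by
  have key := congrArg (PowerSeries.coeff m)
    ((det_tailSeries_eq h hneg (l + 1) e).symm.trans (det_tailSeries_eq_sum h l e))
  rw [PowerSeries.coeff_mul_C, tailSeries, PowerSeries.coeff_mk, zero_add] at key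
  rw [key, map_sum]
  refine Finset.sum_congr rfl fun t _ => ?_
  rw [map_sum, ← sum_range_ite_eq_sum_Icc]
  refine Finset.sum_congr rfl fun q _ => ?_
  rw [PowerSeries.coeff_X_pow_mul']
  split_ifs with hq
  · rw [coeff_det_updateRow_zero, schurJT]
    congr 1
    ext r j
    simp only [Matrix.updateRow_apply, Matrix.of_apply, Fin.ext_iff, Fin.val_zero, tailSeries,
      PowerSeries.coeff_mk]
    split_ifs <;> congr 1 <;> push_cast [*] <;> ring
  · rfl

theorem schurJT_of_last_eq_zero (h0 : h 0 = 1) (hneg : ∀ m : ℤ, m < 0 → h m = 0) {n : ℕ}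
    (μ : Fin (n + 1) → ℤ) (hμ : μ (Fin.last n) = 0) :
    schurJT h μ = schurJT h fun j : Fin n => μ j.castSucc := by
  rw [schurJT, det_of_last_row_eq_zero]
  · simp only [Matrix.of_apply, hμ]
    simp [h0, schurJT, Matrix.submatrix]
  · intro j
    simp only [Matrix.of_apply, hμ, Fin.val_last, Fin.val_castSucc]
    exact hneg _ (by omega)

end Pieri


/-- **Pieri rule for `h_{n-k} · s_{(k-2i, 2^i)}`.**  For `2 ≤ k ≤ n` and
`1 ≤ i ≤ ⌊k/2⌋ - 1`,
`h_{n-k} s_{(k-2i,2^i)} = ∑_{p=max(0,n-2k+2i+2)}^{n-k} s_{(k+p-2i, n-k-p+2, 2^{i-1})}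
 + ∑_{p=max(0,n-2k+2i+1)}^{n-k-1} s_{(k+p-2i, n-k-p+1, 2^{i-1}, 1)}
 + ∑_{p=max(0,n-2k+2i)}^{n-k-2} s_{(k+p-2i, n-k-p, 2^i)}`,
where Schur functions are given by the Jacobi–Trudi determinant. -/
theorem pieri_h_s {R : Type*} [CommRing R] (h : ℤ → R)
    (h0 : h 0 = 1) (hneg : ∀ m : ℤ, m < 0 → h m = 0)
    (n k i : ℕ) (hk2 : 2 ≤ k) (hkn : k ≤ n) (hi1 : 1 ≤ i) (hik : i ≤ k / 2 - 1) :
    h ((n : ℤ) - k) *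
        schurJT h (fun j : Fin (i + 1) => if (j : ℕ) = 0 then (k : ℤ) - 2 * i else 2) =
      (∑ p ∈ Finset.Icc (max 0 ((n : ℤ) - 2 * k + 2 * i + 2)) ((n : ℤ) - k),
        schurJT h (fun j : Fin (i + 1) =>
          if (j : ℕ) = 0 then (k : ℤ) + p - 2 * i
          else if (j : ℕ) = 1 then (n : ℤ) - k - p + 2 else 2)) +
      (∑ p ∈ Finset.Icc (max 0 ((n : ℤ) - 2 * k + 2 * i + 1)) ((n : ℤ) - k - 1),
        schurJT h (fun j : Fin (i + 2) =>
          if (j : ℕ) = 0 then (k : ℤ) + p - 2 * i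
          else if (j : ℕ) = 1 then (n : ℤ) - k - p + 1
          else if (j : ℕ) = i + 1 then 1 else 2)) +
      (∑ p ∈ Finset.Icc (max 0 ((n : ℤ) - 2 * k + 2 * i)) ((n : ℤ) - k - 2),
        schurJT h (fun j : Fin (i + 2) =>
          if (j : ℕ) = 0 then (k : ℤ) + p - 2 * i
          else if (j : ℕ) = 1 then (n : ℤ) - k - p else 2)) := by
  obtain ⟨e, rfl⟩ : ∃ e, i = e + 1 := ⟨i - 1, by omega⟩
  obtain ⟨l, hl⟩ : ∃ l, k = l + 1 + 2 * (e + 1) := ⟨k - 2 * (e + 1) - 1, by omega⟩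
  obtain ⟨m, rfl⟩ : ∃ m, n = k + m := ⟨n - k, by omega⟩
  have key := mul_schurJT_eq_sum h hneg l e m
  rw [Finset.sum_range_succ, Finset.sum_range_succ, Finset.sum_range_one] at key
  have hm : ((k + m : ℕ) : ℤ) - k = m := by push_cast; ring
  have ha : (k : ℤ) - 2 * ((e + 1 : ℕ) : ℤ) = l + 1 := by push_cast [hl]; ring
  rw [hm, ha]
  refine key.trans ?_
  congr 1
  · congr 1
    · refine Finset.sum_congr ?_ fun p _ => ?_
      · congr 1
        push_cast [hl]; ring_nf
      · rw [schurJT_of_last_eq_zero h h0 hneg _ (by simp)]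
        congr 1
        ext j
        have hj : (j : ℕ) ≠ e + 2 := by omega
        simp only [Fin.val_castSucc, hj, if_false]
        split_ifs <;> push_cast [hl] <;> ring
    · refine Finset.sum_congr ?_ fun p _ => ?_
      · congr 1
        push_cast [hl]; ring_nf
      · congr 1
        ext j
        split_ifs <;> push_cast [hl] <;> ring
  · refine Finset.sum_congr ?_ fun p _ => ?_
    · congr 1
      push_cast [hl]; ring_nf
    · congr 1
      ext j
      split_ifs <;> push_cast [hl] <;> ring
end

section
/- For a partition λ = (λ_1, λ_2, 2^j) of n with λ_1 ≥ λ_2 ≥ 2 and j ≥ 1, the coefficient of s_λ in B_n(x;t) = Σ_{k=2}^{n} h_{n-k} Σ_{i=0}^{⌊k/2⌋-1} s_{(k-2i,2^i)} t^{i+1} equals (λ_1 - λ_2 + 1)(t^{j+2} + t^{j+1}) = (λ_1 - λ_2 + 1) t^{ℓ(λ)-1}(t+1). -/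
/-- The ring of symmetric functions `Λ = ℤ[h₁, h₂, …]`. -/
noncomputable def hh (m : ℤ) : MvPolynomial ℕ ℤ :=
  if m < 0 then 0 else if m = 0 then 1 else MvPolynomial.X m.toNat

/-- `B_n(x;t) = ∑_{k=2}^n h_{n-k} ∑_{i=0}^{⌊k/2⌋-1} s_{(k-2i,2^i)} t^{i+1}`. -/
noncomputable def Bpoly (n : ℕ) : Polynomial (MvPolynomial ℕ ℤ) :=
  ∑ k ∈ Finset.Icc 2 n, Polynomial.C (hh ((n : ℤ) - k)) *
    ∑ i ∈ Finset.range (k / 2),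
      Polynomial.C (schurJT hh fun j : Fin (i + 1) =>
        if (j : ℕ) = 0 then (k : ℤ) - 2 * i else 2) * Polynomial.X ^ (i + 1)

/-- The Schur function of a partition of `n` (its parts sorted decreasingly). -/
noncomputable def schurOfPartition {n : ℕ} (μ : Nat.Partition n) : MvPolynomial ℕ ℤ :=
  schurJT hh fun i : Fin (μ.parts.sort (· ≥ ·)).length =>
    (((μ.parts.sort (· ≥ ·)).get i : ℕ) : ℤ)

/-- The product of geometric series `∏ₗ 1 / (1 - xₗ T)`, whose coefficients are the complete
homogeneous symmetric polynomials in `N` variables. -/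
noncomputable def completeSeries (N : ℕ) : PowerSeries (MvPolynomial (Fin N) ℤ) :=
  ∏ l : Fin N, PowerSeries.mk fun m => MvPolynomial.X l ^ m

/-- Specialization of abstract symmetric functions to `N` variables. -/
noncomputable def completeHom (N : ℕ) : MvPolynomial ℕ ℤ →ₐ[ℤ] MvPolynomial (Fin N) ℤ :=
  MvPolynomial.aeval fun m => PowerSeries.coeff m (completeSeries N)

/-- The product `∏_{l ≠ k} (1 - xₗ T)`. -/
noncomputable def omittedProduct (N : ℕ) (k : Fin N) : Polynomial (MvPolynomial (Fin N) ℤ) :=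
  ∏ l ∈ Finset.univ.erase k, (1 - Polynomial.C (MvPolynomial.X l) * Polynomial.X)

/-- Signed elementary symmetric polynomials in all variables but one; its determinant is the
Vandermonde alternant. -/
noncomputable def elementaryMatrix (N : ℕ) : Matrix (Fin N) (Fin N) (MvPolynomial (Fin N) ℤ) :=
  Matrix.of fun j k => (omittedProduct N k).coeff (N - 1 - j)

lemma coeff_completeSeries (N m : ℕ) :
    PowerSeries.coeff m (completeSeries N) =
      ∑ s ∈ Finset.finsuppAntidiag (Finset.univ : Finset (Fin N)) m, MvPolynomial.monomial s 1 := by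
  classical
  rw [completeSeries, PowerSeries.coeff_prod]
  refine Finset.sum_congr rfl fun s _ => ?_
  simp only [PowerSeries.coeff_mk]
  rw [MvPolynomial.monomial_eq, Finsupp.prod_fintype _ _ (by simp)]
  simp

lemma coeff_coeff_completeSeries (N m : ℕ) (s : Fin N →₀ ℕ) :
    (PowerSeries.coeff m (completeSeries N)).coeff s = if ∑ i, s i = m then 1 else 0 := by
  classical
  simp [coeff_completeSeries, MvPolynomial.coeff_sum, MvPolynomial.coeff_monomial]

lemma hh_neg {m : ℤ} (hm : m < 0) : hh m = 0 := by simp [hh, hm]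

lemma hh_zero : hh 0 = 1 := by simp [hh]

lemma completeHom_hh (N m : ℕ) :
    completeHom N (hh m) = PowerSeries.coeff m (completeSeries N) := by
  rcases Nat.eq_zero_or_pos m with rfl | hm
  · simp [hh, coeff_completeSeries]
  · have h : ¬ (m : ℤ) < 0 := by omega
    rw [hh, if_neg h, if_neg (by omega), completeHom, MvPolynomial.aeval_X, Int.toNat_natCast]

lemma omittedProduct_coeff_eq_zero (N : ℕ) (k : Fin N) {q : ℕ} (hq : N ≤ q) :
    (omittedProduct N k).coeff q = 0 := by
  apply Polynomial.coeff_eq_zero_of_natDegree_lt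
  refine lt_of_le_of_lt (Polynomial.natDegree_prod_le _ _) ?_
  refine lt_of_le_of_lt (Finset.sum_le_card_nsmul _ _ 1 fun l _ => ?_) ?_
  · compute_degree
  · have := k.pos
    simp
    omega

lemma completeSeries_mul_omittedProduct (N : ℕ) (k : Fin N) :
    completeSeries N * (omittedProduct N k : PowerSeries (MvPolynomial (Fin N) ℤ)) =
      PowerSeries.mk fun m => MvPolynomial.X k ^ m := by
  have key : ∀ l : Fin N, (PowerSeries.mk fun m => (MvPolynomial.X l : MvPolynomial (Fin N) ℤ) ^ m) *
      (1 - PowerSeries.C (MvPolynomial.X l) * PowerSeries.X) = 1 := by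
    intro l
    ext1 m
    rw [mul_sub, mul_one, map_sub, mul_left_comm, PowerSeries.coeff_C_mul]
    cases m with
    | zero => simp
    | succ m => simp [PowerSeries.coeff_succ_mul_X, pow_succ', PowerSeries.coeff_one]
  have hP : (omittedProduct N k : PowerSeries (MvPolynomial (Fin N) ℤ)) =
      ∏ l ∈ Finset.univ.erase k, (1 - PowerSeries.C (MvPolynomial.X l) * PowerSeries.X) := by
    rw [omittedProduct, ← Polynomial.coeToPowerSeries.ringHom_apply, map_prod]
    simp
  rw [hP, completeSeries, ← Finset.mul_prod_erase _ _ (Finset.mem_univ k), mul_assoc,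
    ← Finset.prod_mul_distrib, Finset.prod_congr rfl fun l _ => key l]
  simp

lemma sum_completeHom_hh_mul_coeff (N a : ℕ) (k : Fin N) :
    ∑ q ∈ Finset.range N, completeHom N (hh ((a : ℤ) - q)) * (omittedProduct N k).coeff q =
      MvPolynomial.X k ^ a := by
  have h := congrArg (PowerSeries.coeff a) (completeSeries_mul_omittedProduct N k)
  rw [mul_comm, PowerSeries.coeff_mul, PowerSeries.coeff_mk,
    Finset.Nat.sum_antidiagonal_eq_sum_range_succ
      (fun p q => PowerSeries.coeff p (omittedProduct N k : PowerSeries _) *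
        PowerSeries.coeff q (completeSeries N))] at h
  rw [← h]
  have hterm : ∀ q ∈ Finset.range (a + 1),
      PowerSeries.coeff q (omittedProduct N k : PowerSeries (MvPolynomial (Fin N) ℤ)) *
        PowerSeries.coeff (a - q) (completeSeries N) =
      completeHom N (hh ((a : ℤ) - q)) * (omittedProduct N k).coeff q := by
    intro q hq
    have hq' : q ≤ a := by simpa [Nat.lt_succ_iff] using hq
    rw [← Nat.cast_sub hq', completeHom_hh, Polynomial.coeff_coe, mul_comm]
  rw [Finset.sum_congr rfl hterm]
  trans ∑ q ∈ Finset.range (max N (a + 1)),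
    completeHom N (hh ((a : ℤ) - q)) * (omittedProduct N k).coeff q
  · refine Finset.sum_subset (by simp) fun q _ hq => ?_
    rw [omittedProduct_coeff_eq_zero N k (by simpa using hq), mul_zero]
  · refine (Finset.sum_subset (by simp) fun q _ hq => ?_).symm
    rw [hh_neg (by simp at hq; omega), map_zero, zero_mul]

/-- Jacobi–Trudi: the product of the Vandermonde alternant with a Schur polynomial is an
alternant. -/
lemma completeHom_schurJT_mul_det (N : ℕ) (f : ℕ → ℕ) :
    completeHom N (schurJT hh fun i : Fin N => (f i : ℤ)) * (elementaryMatrix N).det =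
      (Matrix.of fun i k : Fin N =>
        (MvPolynomial.X k : MvPolynomial (Fin N) ℤ) ^ (f i + (N - 1 - i))).det := by
  rw [schurJT, AlgHom.map_det, ← Matrix.det_mul]
  congr 1
  ext1 i k
  simp only [Matrix.mul_apply, AlgHom.mapMatrix_apply, Matrix.map_apply, Matrix.of_apply,
    elementaryMatrix]
  rw [← sum_completeHom_hh_mul_coeff, ← Finset.sum_range_reflect, Finset.sum_range]
  refine Finset.sum_congr rfl fun j _ => ?_
  congr 3
  omega

lemma schurJT_hh_succ (f : ℕ → ℕ) (r : ℕ) (hf : f r = 0) :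
    schurJT hh (fun i : Fin (r + 1) => (f i : ℤ)) = schurJT hh fun i : Fin r => (f i : ℤ) := by
  rw [schurJT, Matrix.det_succ_row _ (Fin.last r), Finset.sum_eq_single (Fin.last r)]
  · simp only [Matrix.of_apply, Fin.val_last, hf, Fin.succAbove_last]
    simp [hh_zero, ← two_mul, schurJT, Matrix.submatrix]
  · intro j _ hj
    have : (j : ℕ) < r := Fin.val_lt_last hj
    rw [Matrix.of_apply, hh_neg (by simp [hf]; omega)]
    simp
  · simp

/-- Appending zero parts does not change a Schur function. -/
lemma schurJT_hh_of_le (f : ℕ → ℕ) {r N : ℕ} (hrN : r ≤ N) (hf : ∀ p, r ≤ p → f p = 0) :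
    schurJT hh (fun i : Fin N => (f i : ℤ)) = schurJT hh fun i : Fin r => (f i : ℤ) := by
  induction N, hrN using Nat.le_induction with
  | base => rfl
  | succ N hN ih => rw [schurJT_hh_succ f N (hf N hN), ih]

/-- The zero-one matrix comparing two strictly decreasing sequences has determinant one if the
sequences interlace, and zero otherwise. -/
lemma det_le_indicator {N : ℕ} (L M : Fin N → ℕ) (hL : StrictAnti L) (hM : StrictAnti M) :
    (Matrix.of fun i j : Fin N => if M j ≤ L i then (1 : ℤ) else 0).det =
      if ∀ i j, M j ≤ L i ↔ i ≤ j then 1 else 0 := by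
  classical
  split_ifs with h
  · rw [Matrix.det_of_isUpperTriangular]
    · simp [h]
    · intro i j hij
      have : j < i := hij
      simp [h, this]
  · by_contra hdet
    apply h
    set U : Fin N → Finset (Fin N) := fun i => Finset.univ.filter fun j => M j ≤ L i with hU
    have hmono : ∀ i i', i ≤ i' → U i' ⊆ U i := fun i i' hi j hj => by
      simp only [hU, Finset.mem_filter_univ] at hj ⊢
      exact hj.trans (hL.antitone hi)
    have hpos : ∀ i, 0 < (U i).card := by
      intro i
      rw [Finset.card_pos, Finset.nonempty_iff_ne_empty]
      intro he
      refine hdet (Matrix.det_eq_zero_of_row_eq_zero i fun j => ?_)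
      have : j ∉ U i := by simp [he]
      simpa [hU] using this
    have hanti : StrictAnti fun i => (U i).card := by
      intro i i' hi
      refine lt_of_le_of_ne (Finset.card_le_card (hmono i i' hi.le)) fun hc => ?_
      have heq := Finset.eq_of_subset_of_card_le (hmono i i' hi.le) hc.ge
      refine hdet (Matrix.det_zero_of_row_eq hi.ne ?_)
      ext j
      have : j ∈ U i' ↔ j ∈ U i := by rw [heq]
      simp only [hU, Finset.mem_filter_univ] at this
      simp [this]
    have hinj : StrictMono fun i : Fin N => (⟨N - (U i).card, by
        have := hpos i; have := i.pos; omega⟩ : Fin N) := by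
      intro i i' hi
      have h1 := hanti hi
      have h2 := Finset.card_le_univ (U i)
      simp only [Fintype.card_fin] at h2
      simp only [Fin.mk_lt_mk] at h1 ⊢
      omega
    have hcard : ∀ i : Fin N, (U i).card = N - i := by
      intro i
      have h1 := congrFun ((StrictMono.range_inj hinj strictMono_id).mp (by
        rw [(Finite.injective_iff_surjective.mp hinj.injective).range_eq]; simp)) i
      have h2 := Finset.card_le_univ (U i)
      simp only [Fintype.card_fin] at h2
      simp only [id, Fin.ext_iff] at h1
      omega
    have hsub : ∀ i, U i ⊆ Finset.Ici i := by
      intro i j hj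
      have : Finset.Ici j ⊆ U i := fun j' hj' => by
        simp only [hU, Finset.mem_filter_univ, Finset.mem_Ici] at hj hj' ⊢
        exact (hM.antitone hj').trans hj
      have := Finset.card_le_card this
      rw [hcard, Fin.card_Ici] at this
      rw [Finset.mem_Ici, Fin.le_def]
      omega
    intro i j
    have : U i = Finset.Ici i :=
      Finset.eq_of_subset_of_card_le (hsub i) (by rw [hcard, Fin.card_Ici])
    rw [← Finset.mem_Ici (a := i), ← this]
    simp [hU]

/-- Pieri's rule at the level of alternants. -/
lemma coeff_det_mul_coeff_completeSeries {N : ℕ} (m : ℕ) (L M : Fin N → ℕ) (hL : StrictAnti L)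
    (hM : StrictAnti M) (hsum : ∑ i, L i = ∑ i, M i + m) :
    ((Matrix.of fun i k : Fin N => (MvPolynomial.X k : MvPolynomial (Fin N) ℤ) ^ M i).det *
      PowerSeries.coeff m (completeSeries N)).coeff (Finsupp.equivFunOnFinite.symm L) =
      if ∀ i j, M j ≤ L i ↔ i ≤ j then 1 else 0 := by
  classical
  rw [← det_le_indicator L M hL hM, ← Matrix.det_transpose, Matrix.det_apply', Matrix.det_apply',
    Finset.sum_mul, MvPolynomial.coeff_sum]
  refine Finset.sum_congr rfl fun σ _ => ?_
  have hmon : ∏ i, (Matrix.of fun i k : Fin N =>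
      (MvPolynomial.X k : MvPolynomial (Fin N) ℤ) ^ M i).transpose (σ i) i =
      MvPolynomial.monomial (Finsupp.equivFunOnFinite.symm (M ∘ σ.symm)) 1 := by
    rw [MvPolynomial.monomial_eq, Finsupp.prod_fintype _ _ (by simp), map_one, one_mul,
      ← Equiv.prod_comp σ fun x => MvPolynomial.X x ^ Finsupp.equivFunOnFinite.symm (M ∘ σ.symm) x]
    simp
  have hsgn : ((σ.sign : ℤ) : MvPolynomial (Fin N) ℤ) = MvPolynomial.C (σ.sign : ℤ) := by simp
  rw [hmon, hsgn, mul_assoc, MvPolynomial.coeff_C_mul, MvPolynomial.coeff_monomial_mul', one_mul,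
    coeff_coeff_completeSeries]
  congr 1
  have hiff : Finsupp.equivFunOnFinite.symm (M ∘ σ.symm) ≤ Finsupp.equivFunOnFinite.symm L ↔
      ∀ i, M i ≤ L (σ i) := by
    rw [Finsupp.le_def, ← σ.forall_congr_right]
    simp
  simp only [Matrix.of_apply, Finset.prod_ite_zero, Finset.prod_const_one, Finset.mem_univ,
    true_implies]
  by_cases hle : ∀ i, M i ≤ L (σ i)
  · rw [if_pos (hiff.mpr hle), if_pos hle, if_pos]
    simp only [Finsupp.tsub_apply, Finsupp.equivFunOnFinite_symm_apply_apply]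
    have h1 : ∑ i, (M ∘ σ.symm) i = ∑ i, M i := Equiv.sum_comp σ.symm M
    rw [Finset.sum_tsub_distrib _ fun i _ => by simpa using hle (σ.symm i), h1, hsum]
    omega
  · rw [if_neg (mt hiff.mp hle), if_neg hle]

/-- For `L = λ + δ`, the coefficient of `s_λ` in a symmetric function, read off as the coefficient
of `x ^ L` in its product with the Vandermonde alternant. -/
noncomputable def alternantCoeff {N : ℕ} (L : Fin N → ℕ) : MvPolynomial ℕ ℤ →ₗ[ℤ] ℤ :=
  MvPolynomial.lcoeff ℤ (Finsupp.equivFunOnFinite.symm L) ∘ₗ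
    LinearMap.mulRight ℤ (elementaryMatrix N).det ∘ₗ (completeHom N).toLinearMap

lemma sum_range_getD (l : List ℕ) {N : ℕ} (hN : l.length ≤ N) :
    ∑ p ∈ Finset.range N, l.getD p 0 = l.sum := by
  induction l generalizing N with
  | nil => simp
  | cons a l ih =>
    obtain ⟨N, rfl⟩ : ∃ N', N = N' + 1 := ⟨N - 1, by simp at hN; omega⟩
    simp only [List.length_cons, add_le_add_iff_right] at hN
    rw [Finset.sum_range_succ', List.sum_cons, ← ih hN, add_comm]
    simp

lemma antitone_getD (l : List ℕ) (hl : l.Pairwise (· ≥ ·)) : Antitone fun p => l.getD p 0 := by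
  refine antitone_nat_of_succ_le fun p => ?_
  by_cases hp : p + 1 < l.length
  · rw [List.getD_eq_getElem _ _ hp, List.getD_eq_getElem _ _ (by omega)]
    exact List.pairwise_iff_getElem.mp hl p (p + 1) (by omega) hp (by omega)
  · rw [List.getD_eq_default _ _ (by omega)]
    exact Nat.zero_le _

lemma eq_of_getD_eq (l l' : List ℕ) (hl : ∀ a ∈ l, 0 < a) (hl' : ∀ a ∈ l', 0 < a)
    (h : ∀ p, l.getD p 0 = l'.getD p 0) : l = l' := by
  induction l generalizing l' with
  | nil =>
    cases l' with
    | nil => rfl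
    | cons b l' => have := h 0; simp at this hl'; omega
  | cons a l ih =>
    cases l' with
    | nil => have := h 0; simp at this hl; omega
    | cons b l' =>
      simp only [List.mem_cons, forall_eq_or_imp] at hl hl'
      have h0 : a = b := by simpa using h 0
      rw [h0, ih l' hl.2 hl'.2 fun p => by simpa using h (p + 1)]

open Classical in
/-- Pieri's rule: the coefficient of `s_λ` in `h_m s_μ` is one if `λ / μ` is a horizontal strip,
and zero otherwise. -/
lemma alternantCoeff_hh_mul_schurJT (N m : ℕ) (l l' : List ℕ) (hl : l.Pairwise (· ≥ ·))
    (hl' : l'.Pairwise (· ≥ ·)) (hlN : l.length ≤ N) (hlN' : l'.length ≤ N)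
    (hsum : l.sum = l'.sum + m) :
    alternantCoeff (fun i : Fin N => l.getD i 0 + (N - 1 - i))
      (hh m * schurJT hh fun i : Fin l'.length => (l'.getD i 0 : ℤ)) =
      if ∀ p, l'.getD p 0 ≤ l.getD p 0 ∧ l.getD (p + 1) 0 ≤ l'.getD p 0 then 1 else 0 := by
  have hanti : ∀ l : List ℕ, l.Pairwise (· ≥ ·) →
      StrictAnti fun i : Fin N => l.getD i 0 + (N - 1 - i) := by
    intro l hl i i' hi
    have := antitone_getD l hl (Fin.le_def.mp hi.le)
    simp only [Fin.lt_def] at this hi ⊢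
    omega
  rw [← schurJT_hh_of_le (fun p => l'.getD p 0) hlN' fun p hp => List.getD_eq_default _ _ hp]
  simp only [alternantCoeff, LinearMap.comp_apply, AlgHom.toLinearMap_apply, map_mul,
    LinearMap.mulRight_apply, MvPolynomial.lcoeff_apply]
  rw [mul_assoc, completeHom_schurJT_mul_det N fun p => l'.getD p 0, completeHom_hh, mul_comm,
    coeff_det_mul_coeff_completeSeries m _ _ (hanti l hl) (hanti l' hl')]
  · refine if_congr ⟨fun h p => ?_, fun h i j => ?_⟩ rfl rfl
    · rcases lt_or_ge p N with hp | hp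
      · have h1 := (h ⟨p, hp⟩ ⟨p, hp⟩).mpr le_rfl
        refine ⟨by simpa using h1, ?_⟩
        rcases lt_or_ge (p + 1) N with hp' | hp'
        · have h2 := mt (h ⟨p + 1, hp'⟩ ⟨p, hp⟩).mp (by simp)
          simp only at h2
          omega
        · rw [List.getD_eq_default l _ (by omega)]
          exact Nat.zero_le _
      · rw [List.getD_eq_default l _ (by omega), List.getD_eq_default l _ (by omega),
          List.getD_eq_default l' _ (by omega)]
        simp
    · constructor
      · intro hle
        by_contra! hij
        have h1 := (h j).2
        have h2 := antitone_getD l hl (show (j : ℕ) + 1 ≤ i from hij)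
        simp only [Fin.lt_def] at h2 hij
        have := i.isLt
        omega
      · intro hij
        have h1 := (h i).1
        have h2 := (hanti l' hl').antitone hij
        omega
  · rw [Finset.sum_add_distrib, Finset.sum_add_distrib, Fin.sum_univ_eq_sum_range (l.getD · 0),
      Fin.sum_univ_eq_sum_range (l'.getD · 0), sum_range_getD l hlN, sum_range_getD l' hlN', hsum]
    omega

lemma length_sort_parts_le {n : ℕ} (μ : Nat.Partition n) :
    (μ.parts.sort (· ≥ ·)).length ≤ n := by
  have h := Multiset.card_nsmul_le_sum (s := μ.parts) (a := 1) fun x hx => μ.parts_pos hx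
  simpa [μ.parts_sum] using h

lemma sum_sort_parts {n : ℕ} (μ : Nat.Partition n) : (μ.parts.sort (· ≥ ·)).sum = n := by
  rw [← Multiset.sum_coe, Multiset.sort_eq, μ.parts_sum]

lemma alternantCoeff_schurOfPartition {n : ℕ} (lam μ : Nat.Partition n) :
    alternantCoeff (fun i : Fin n => (lam.parts.sort (· ≥ ·)).getD i 0 + (n - 1 - i))
      (schurOfPartition μ) = if μ = lam then 1 else 0 := by
  classical
  have h := alternantCoeff_hh_mul_schurJT n 0 (lam.parts.sort (· ≥ ·)) (μ.parts.sort (· ≥ ·))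
    (Multiset.pairwise_sort _ _) (Multiset.pairwise_sort _ _) (length_sort_parts_le lam)
    (length_sort_parts_le μ) (by rw [sum_sort_parts, sum_sort_parts, add_zero])
  rw [Nat.cast_zero, hh_zero, one_mul] at h
  have hS : schurOfPartition μ = schurJT hh fun i : Fin (μ.parts.sort (· ≥ ·)).length =>
      ((μ.parts.sort (· ≥ ·)).getD i 0 : ℤ) := by
    rw [schurOfPartition]
    congr 1
    ext1 i
    rw [List.getD_eq_getElem _ _ i.isLt, List.get_eq_getElem]
  rw [hS, h]
  refine if_congr ⟨fun hp => ?_, ?_⟩ rfl rfl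
  · have hsum := (Finset.sum_eq_sum_iff_of_le fun p _ => (hp p).1).mp
      ((sum_range_getD _ (length_sort_parts_le μ)).trans
        ((sum_sort_parts μ).trans ((sum_range_getD _ (length_sort_parts_le lam)).trans
          (sum_sort_parts lam)).symm))
    have hlist := eq_of_getD_eq (μ.parts.sort (· ≥ ·)) (lam.parts.sort (· ≥ ·))
      (fun a ha => μ.parts_pos (by simpa using ha)) (fun a ha => lam.parts_pos (by simpa using ha))
      fun p => by
        rcases lt_or_ge p n with hpn | hpn
        · exact hsum p (Finset.mem_range.mpr hpn)
        · rw [List.getD_eq_default _ _ ((length_sort_parts_le μ).trans hpn),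
            List.getD_eq_default _ _ ((length_sort_parts_le lam).trans hpn)]
    ext1
    rw [← Multiset.sort_eq μ.parts (· ≥ ·), hlist, Multiset.sort_eq]
  · rintro rfl p
    exact ⟨le_rfl, antitone_getD _ (Multiset.pairwise_sort _ _) p.le_succ⟩

/-- `(l₁, l₂, 2^j) / (a, 2^i)` is a horizontal strip exactly when `l₂ ≤ a ≤ l₁` and
`i ∈ {j, j + 1}`. -/
lemma horizontal_strip_iff (l1 l2 j a i : ℕ) (h2 : 2 ≤ l2) :
    (∀ p, (a :: List.replicate i 2).getD p 0 ≤ (l1 :: l2 :: List.replicate j 2).getD p 0 ∧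
      (l1 :: l2 :: List.replicate j 2).getD (p + 1) 0 ≤ (a :: List.replicate i 2).getD p 0) ↔
      (l2 ≤ a ∧ a ≤ l1) ∧ (i = j ∨ i = j + 1) := by
  have hrep : ∀ r p : ℕ, (List.replicate r 2).getD p 0 = if p < r then 2 else 0 := by
    intro r p
    split_ifs with h
    · rw [List.getD_eq_getElem _ _ (by simpa using h), List.getElem_replicate]
    · rw [List.getD_eq_default _ _ (by simpa using h)]
  constructor
  · intro h
    have h0 := h 0
    have h1 := (h (j + 2)).1
    have h3 := (h j).2
    simp only [List.getD_cons_zero, List.getD_cons_succ, hrep] at h0 h1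
    refine ⟨⟨h0.2, h0.1⟩, ?_⟩
    cases j with
    | zero => split_ifs at h1 <;> omega
    | succ j =>
      simp only [List.getD_cons_succ, hrep] at h3
      split_ifs at h1 h3 <;> omega
  · rintro ⟨⟨ha, ha'⟩, hij⟩ p
    rcases p with _ | _ | p
    · simpa using ⟨ha', ha⟩
    · simp only [List.getD_cons_zero, List.getD_cons_succ, hrep]
      split_ifs <;> omega
    · simp only [List.getD_cons_succ, hrep]
      split_ifs <;> omega

lemma coeff_Bpoly (n d : ℕ) :
    (Bpoly n).coeff d = ∑ k ∈ Finset.Icc 2 n, ∑ i ∈ Finset.range (k / 2), if d = i + 1 then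
      hh ((n - k : ℕ) : ℤ) * schurJT hh fun p : Fin ((k - 2 * i) :: List.replicate i 2).length =>
        (((k - 2 * i) :: List.replicate i 2).getD p 0 : ℤ) else 0 := by
  rw [Bpoly, Polynomial.finsetSum_coeff]
  refine Finset.sum_congr rfl fun k hk => ?_
  rw [Polynomial.coeff_C_mul, Polynomial.finsetSum_coeff, Finset.mul_sum]
  refine Finset.sum_congr rfl fun i hi => ?_
  rw [Finset.mem_Icc] at hk
  rw [Finset.mem_range] at hi
  rw [Polynomial.coeff_C_mul_X_pow, mul_ite, mul_zero, Nat.cast_sub hk.2]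
  congr 2
  have hS : ∀ r : ℕ, r = i + 1 → schurJT hh (fun p : Fin r =>
      (((k - 2 * i) :: List.replicate i 2).getD p 0 : ℤ)) =
      schurJT hh fun p : Fin (i + 1) => if (p : ℕ) = 0 then (k : ℤ) - 2 * i else 2 := by
    rintro r rfl
    congr 1
    ext1 p
    obtain ⟨_ | p, hp⟩ := p
    · simp
      omega
    · have hp' : p < (List.replicate i 2).length := by simpa using hp
      simp only [List.getD_cons_succ]
      rw [List.getD_eq_getElem _ _ hp', List.getElem_replicate]
      simp
  exact (hS _ (by simp)).symm

lemma card_filter_Icc (n l1 l2 e : ℕ) (h12 : l2 ≤ l1) (h2 : 2 ≤ l2) (hn : l1 + 2 * e ≤ n) :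
    (((Finset.Icc 2 n).filter fun k => e < k / 2 ∧ l2 ≤ k - 2 * e ∧ k - 2 * e ≤ l1).card : ℤ) =
      l1 - l2 + 1 := by
  have : ((Finset.Icc 2 n).filter fun k => e < k / 2 ∧ l2 ≤ k - 2 * e ∧ k - 2 * e ≤ l1) =
      Finset.Icc (l2 + 2 * e) (l1 + 2 * e) := by
    ext k
    simp only [Finset.mem_filter, Finset.mem_Icc]
    omega
  rw [this, Nat.card_Icc]
  omega

/-- **Coefficient of `s_λ` in `B_n(x;t)` for `λ = (λ₁, λ₂, 2^j)` with `λ₁ ≥ λ₂ ≥ 2`, `j ≥ 1`:**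
in any Schur expansion of `B_n`, the coefficient of `s_λ` equals
`(λ₁ - λ₂ + 1)(t^{j+2} + t^{j+1}) = (λ₁ - λ₂ + 1) t^{ℓ(λ)-1}(t+1)` (with `ℓ(λ) = j+2`). -/
theorem coeff_of_sLambda_in_B (n l1 l2 j : ℕ) (h12 : l2 ≤ l1) (h2 : 2 ≤ l2) (hj : 1 ≤ j)
    (lam : Nat.Partition n)
    (hlam : lam.parts.sort (· ≥ ·) = l1 :: l2 :: List.replicate j 2)
    (c : Nat.Partition n → Polynomial ℤ)
    (hc : Bpoly n = ∑ μ : Nat.Partition n,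
        (c μ).map (Int.castRingHom (MvPolynomial ℕ ℤ)) * Polynomial.C (schurOfPartition μ)) :
    c lam = ((l1 : ℤ) - l2 + 1) • (Polynomial.X ^ (j + 2) + Polynomial.X ^ (j + 1)) := by
  have hn : n = l1 + l2 + 2 * j := by
    rw [← sum_sort_parts lam, hlam]
    simp
    ring
  have hsort : (l1 :: l2 :: List.replicate j 2).Pairwise (· ≥ ·) :=
    hlam ▸ Multiset.pairwise_sort _ _
  ext d
  have h := congrArg (fun P => alternantCoeff
    (fun i : Fin n => (lam.parts.sort (· ≥ ·)).getD i 0 + (n - 1 - i)) (P.coeff d)) hc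
  classical
  have hright : ∀ μ : Nat.Partition n, alternantCoeff
      (fun i : Fin n => (lam.parts.sort (· ≥ ·)).getD i 0 + (n - 1 - i))
      ((c μ).map (Int.castRingHom (MvPolynomial ℕ ℤ)) *
        Polynomial.C (schurOfPartition μ) |>.coeff d) =
      if μ = lam then (c μ).coeff d else 0 := by
    intro μ
    rw [Polynomial.coeff_mul_C, Polynomial.coeff_map, eq_intCast, ← zsmul_eq_mul, map_zsmul,
      alternantCoeff_schurOfPartition]
    simp
  simp only [Polynomial.finsetSum_coeff, map_sum, hright, Finset.sum_ite_eq',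
    Finset.mem_univ, if_true] at h
  simp only [coeff_Bpoly, map_sum, hlam] at h
  rw [← h]
  have hleft : ∀ k ∈ Finset.Icc 2 n, ∀ i ∈ Finset.range (k / 2),
      alternantCoeff (fun p : Fin n => (l1 :: l2 :: List.replicate j 2).getD p 0 + (n - 1 - p))
        (if d = i + 1 then hh ((n - k : ℕ) : ℤ) *
          schurJT hh fun p : Fin ((k - 2 * i) :: List.replicate i 2).length =>
            (((k - 2 * i) :: List.replicate i 2).getD p 0 : ℤ) else 0) =
      if d = i + 1 then
        if (l2 ≤ k - 2 * i ∧ k - 2 * i ≤ l1) ∧ (i = j ∨ i = j + 1) then 1 else 0 else 0 := by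
    intro k hk i hi
    rw [Finset.mem_Icc] at hk
    rw [Finset.mem_range] at hi
    by_cases hd : d = i + 1
    · simp only [if_pos hd]
      rw [alternantCoeff_hh_mul_schurJT n (n - k) _ ((k - 2 * i) :: List.replicate i 2) hsort
        (by simp [List.pairwise_replicate]; omega) (by simp; omega) (by simp; omega)
        (by simp; omega)]
      exact if_congr (horizontal_strip_iff l1 l2 j _ i h2) rfl rfl
    · simp only [if_neg hd, map_zero]
  rw [Finset.sum_congr rfl fun k hk => Finset.sum_congr rfl (hleft k hk)]
  rw [Polynomial.coeff_smul, Polynomial.coeff_add, Polynomial.coeff_X_pow, Polynomial.coeff_X_pow,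
    smul_eq_mul]
  rcases d with _ | e
  · simp
  · simp only [add_left_inj, Finset.sum_ite_eq, Finset.mem_range]
    simp only [← ite_and]
    by_cases he : e = j ∨ e = j + 1
    · simp only [he, and_true, Finset.sum_boole]
      rw [card_filter_Icc n l1 l2 e h12 h2 (by omega)]
      rcases he with rfl | rfl <;> simp
    · simp only [he, and_false, if_false, Finset.sum_const_zero]
      rw [if_neg (by omega), if_neg (by omega)]
      simp
end
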